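/- arXiv:2004.09333 — 2 statements merged into one kernel-verified Lean document; each statement's English description precedes it below -/
import Mathlib

section
/- There exists an absolute constant c > 0 with the following property. Let X and Y be real-valued random variables with characteristic functions φ_X and φ_Y, and let Z be a real-valued random variable whose law is absolutely continuous with respect to Lebesgue measure with a bounded density f_Z. Then for every T > 0, d_K(X,Z) ≤ (4c+1)·d_K(Y,Z) + ∫_{−T}^{T} | (φ_X(t) − φ_Y(t)) / t | dt + 2‖f_Z‖_∞ c² / T, where d_K(U,V) = sup_{t∈ℝ} |P(U ≤ t) − P(V ≤ t)| is the Kolmogorov distance and ‖f_Z‖_∞ = sup f_Z. -/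
open MeasureTheory Filter Topology Complex
open scoped ENNReal

/-- The characteristic function of a law `μ` on `ℝ`: `φ_μ(t) = ∫ e^{itx} dμ(x)`. -/
noncomputable def charFn (μ : Measure ℝ) (t : ℝ) : ℂ :=
  ∫ x, Complex.exp ((t * x : ℝ) * Complex.I) ∂μ

/-- The Kolmogorov (uniform) distance between two laws on `ℝ`:
`d_K(μ,ν) = sup_t |μ(-∞,t] − ν(-∞,t]|`. -/
noncomputable def kolDist (μ ν : Measure ℝ) : ℝ :=
  ⨆ t : ℝ, |(μ (Set.Iic t)).toReal - (ν (Set.Iic t)).toReal|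


/-!
Convolve the distribution functions with the Fejér kernel `K`. On a window `[-a, a]` carrying more
than half of the mass of `K`, the Kolmogorov distance to a law with density at most `B` is recovered
from the smoothed distribution functions, up to an error `2aB` from the window and a fraction of the
distance itself from the tails, which is absorbed. The smoothed laws have densities given by Fourier
inversion over `[-1, 1]` only, and `∫ e^{-itv} dv` over any interval is at most `2 / |t|`, so the
smoothed distribution functions of `X` and `Y` differ by at most `∫ |(φ_X(t) - φ_Y(t)) / t| dt`. The
triangle inequality through `Y` for the smoothed functions and the rescaling `x ↦ T x` finish.
-/

open Set NNReal

section Smoothing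

variable {μ ν ρ : Measure ℝ} [IsFiniteMeasure μ] [IsFiniteMeasure ν] [IsFiniteMeasure ρ]
  {K g : ℝ → ℝ} {B : ℝ≥0} {D L R a : ℝ}

lemma abs_measureReal_Iic_sub_le_kolDist (μ ν : Measure ℝ) [IsFiniteMeasure μ]
    [IsFiniteMeasure ν] (x : ℝ) :
    |μ.real (Iic x) - ν.real (Iic x)| ≤ kolDist μ ν := by
  refine le_ciSup (f := fun t => |μ.real (Iic t) - ν.real (Iic t)|)
    ⟨μ.real univ + ν.real univ, ?_⟩ x
  rintro _ ⟨t, rfl⟩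
  have hμ : μ.real (Iic t) ≤ μ.real univ := measureReal_mono (subset_univ _)
  have hν : ν.real (Iic t) ≤ ν.real univ := measureReal_mono (subset_univ _)
  rw [abs_le]
  constructor <;> linarith [measureReal_nonneg (μ := μ) (s := Iic t),
    measureReal_nonneg (μ := ν) (s := Iic t)]

lemma kolDist_nonneg (μ ν : Measure ℝ) : 0 ≤ kolDist μ ν :=
  Real.iSup_nonneg fun _ => abs_nonneg _

lemma monotone_measureReal_Iic (μ : Measure ℝ) [IsFiniteMeasure μ] :
    Monotone fun x => μ.real (Iic x) :=
  fun _ _ hxy => measureReal_mono (Iic_subset_Iic.mpr hxy)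

lemma measureReal_Iic_le_add_of_le_smul_volume {ρ : Measure ℝ} (hρ : ρ ≤ B • volume) {x y : ℝ}
    (hxy : x ≤ y) :
    ρ.real (Iic y) ≤ ρ.real (Iic x) + B * (y - x) := by
  have hIoc : ρ.real (Ioc x y) ≤ B * (y - x) := by
    refine ENNReal.toReal_le_of_le_ofReal (by have := sub_nonneg.mpr hxy; positivity)
      ((hρ _).trans_eq ?_)
    rw [Measure.smul_apply, Real.volume_Ioc, ENNReal.ofReal_mul B.coe_nonneg,
      ENNReal.ofReal_coe_nnreal, ENNReal.smul_def, smul_eq_mul]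
  rw [← Iic_union_Ioc_eq_Iic hxy]
  exact (measureReal_union_le _ _).trans (by gcongr)

/-- The convolution `(F * K)(x) = ∫ F(x - w) K(w) dw` of the distribution function `F` of `μ` with
a kernel `K`. Its values differ from those of `F` by an amount governed by the modulus of
continuity of `F` and the tails of `K`. -/
noncomputable def smoothedCDF (K : ℝ → ℝ) (μ : Measure ℝ) (x : ℝ) : ℝ :=
  ∫ w, μ.real (Iic (x - w)) * K w

lemma integrable_measureReal_Iic_sub_mul (μ : Measure ℝ) [IsFiniteMeasure μ] (hK : Integrable K)
    (x : ℝ) : Integrable fun w => μ.real (Iic (x - w)) * K w := by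
  refine hK.bdd_mul (c := μ.real univ) ?_ (ae_of_all _ fun w => ?_)
  · exact ((monotone_measureReal_Iic μ).measurable.comp
      (measurable_const.sub measurable_id)).aestronglyMeasurable
  · rw [Real.norm_of_nonneg measureReal_nonneg]
    exact measureReal_mono (subset_univ _)

lemma smoothedCDF_sub_smoothedCDF (hK : Integrable K) (x : ℝ) :
    smoothedCDF K μ x - smoothedCDF K ν x =
      ∫ w, (μ.real (Iic (x - w)) - ν.real (Iic (x - w))) * K w := by
  simp only [smoothedCDF, sub_mul]
  exact (integral_sub (integrable_measureReal_Iic_sub_mul μ hK x)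
    (integrable_measureReal_Iic_sub_mul ν hK x)).symm

lemma abs_smoothedCDF_sub_le_kolDist_mul (hK : Integrable K) (hK0 : ∀ w, 0 ≤ K w) (x : ℝ) :
    |smoothedCDF K μ x - smoothedCDF K ν x| ≤ kolDist μ ν * ∫ w, K w := by
  rw [smoothedCDF_sub_smoothedCDF hK, ← integral_const_mul, ← Real.norm_eq_abs]
  refine norm_integral_le_of_norm_le (hK.const_mul _) (ae_of_all _ fun w => ?_)
  rw [norm_mul, Real.norm_of_nonneg (hK0 w)]
  exact mul_le_mul_of_nonneg_right (abs_measureReal_Iic_sub_le_kolDist μ ν _) (hK0 w)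

/- On `[-a, a]` the shifted argument `x + a - w` lies in `[x, x + 2a]`, to the right of `x`, where
`g` has dropped by at most `2aL`; elsewhere only `|g| ≤ D` is available. -/
lemma mul_setIntegral_Icc_le_integral_comp_sub_mul (hg : Measurable g) (hgD : ∀ x, |g x| ≤ D)
    (hL : 0 ≤ L) (hgL : ∀ ⦃x y⦄, x ≤ y → g x - L * (y - x) ≤ g y) (hK : Integrable K)
    (hK0 : ∀ w, 0 ≤ K w) (x : ℝ) :
    g x * (∫ w in Icc (-a) a, K w) ≤ (∫ w, g (x + a - w) * K w)
      + 2 * a * L * (∫ w in Icc (-a) a, K w)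
      + D * ((∫ w, K w) - ∫ w in Icc (-a) a, K w) := by
  have hint : Integrable fun w => g (x + a - w) * K w :=
    hK.bdd_mul (hg.comp (measurable_const.sub measurable_id)).aestronglyMeasurable
      (ae_of_all _ fun w => hgD _)
  have hmain : (g x - 2 * a * L) * (∫ w in Icc (-a) a, K w) ≤
      ∫ w in Icc (-a) a, g (x + a - w) * K w := by
    rw [← integral_const_mul]
    refine setIntegral_mono_on (hK.const_mul _).integrableOn hint.integrableOn measurableSet_Icc
      fun w hw => mul_le_mul_of_nonneg_right ?_ (hK0 w)
    have hdrop := hgL (show x ≤ x + a - w by linarith [hw.2])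
    nlinarith [hw.1]
  have htail : -D * (∫ w in (Icc (-a) a)ᶜ, K w) ≤
      ∫ w in (Icc (-a) a)ᶜ, g (x + a - w) * K w := by
    rw [← integral_const_mul]
    exact setIntegral_mono_on (hK.const_mul _).integrableOn hint.integrableOn
      measurableSet_Icc.compl fun w _ =>
        mul_le_mul_of_nonneg_right (neg_le_of_abs_le (hgD _)) (hK0 w)
  rw [setIntegral_compl measurableSet_Icc hK] at htail
  linarith [integral_add_compl (measurableSet_Icc (a := -a) (b := a)) hint]

lemma abs_mul_setIntegral_Icc_le (hg : Measurable g) (hgD : ∀ x, |g x| ≤ D)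
    (hL : 0 ≤ L) (hgL : ∀ ⦃x y⦄, x ≤ y → g x - L * (y - x) ≤ g y) (hK : Integrable K)
    (hK0 : ∀ w, 0 ≤ K w) (hK_even : ∀ w, K (-w) = K w)
    (hR : ∀ x, |∫ w, g (x - w) * K w| ≤ R) (x : ℝ) :
    |g x| * (∫ w in Icc (-a) a, K w) ≤ R + 2 * a * L * (∫ w in Icc (-a) a, K w)
      + D * ((∫ w, K w) - ∫ w in Icc (-a) a, K w) := by
  rcases abs_choice (g x) with h | h <;> rw [h]
  · linarith [mul_setIntegral_Icc_le_integral_comp_sub_mul (a := a) hg hgD hL hgL hK hK0 x,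
      (abs_le.mp (hR (x + a))).2]
  · have hreflect_int : ∫ w, -g (-(-x + a - w)) * K w = -∫ w, g (x - a - w) * K w := by
      rw [← integral_neg_eq_self, ← integral_neg]
      refine integral_congr_ae (ae_of_all _ fun w => ?_)
      simp only [hK_even, neg_mul]
      congr 3
      ring
    have hreflect := mul_setIntegral_Icc_le_integral_comp_sub_mul (g := fun y => -g (-y)) (a := a)
      (hg.comp measurable_neg).neg (fun y => (abs_neg _).trans_le (hgD _)) hL
      (fun y z hyz => by linarith [hgL (neg_le_neg hyz)]) hK hK0 (-x)
    rw [hreflect_int, neg_neg] at hreflect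
    linarith [(abs_le.mp (hR (x - a))).1]

lemma kolDist_mul_le_of_abs_smoothedCDF_sub_le (hρ : ρ ≤ B • volume) (hK : Integrable K)
    (hK0 : ∀ w, 0 ≤ K w) (hK_even : ∀ w, K (-w) = K w) (hKa : 0 < ∫ w in Icc (-a) a, K w)
    (hR : ∀ x, |smoothedCDF K μ x - smoothedCDF K ρ x| ≤ R) :
    kolDist μ ρ * (2 * (∫ w in Icc (-a) a, K w) - ∫ w, K w) ≤
      R + 2 * a * B * ∫ w in Icc (-a) a, K w := by
  have hpoint := abs_mul_setIntegral_Icc_le (a := a) (L := B) (R := R)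
    (g := fun y => μ.real (Iic y) - ρ.real (Iic y))
    ((monotone_measureReal_Iic μ).measurable.sub (monotone_measureReal_Iic ρ).measurable)
    (abs_measureReal_Iic_sub_le_kolDist μ ρ) B.coe_nonneg
    (fun x y hxy => by
      linarith [monotone_measureReal_Iic μ hxy, measureReal_Iic_le_add_of_le_smul_volume hρ hxy])
    hK hK0 hK_even (fun x => smoothedCDF_sub_smoothedCDF (μ := μ) (ν := ρ) hK x ▸ hR x)
  have hsup : kolDist μ ρ ≤ _ := ciSup_le fun x => (le_div_iff₀ hKa).mpr (hpoint x)
  rw [le_div_iff₀ hKa] at hsup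
  linarith

lemma kolDist_mul_le_add_kolDist (hρ : ρ ≤ B • volume) (hK : Integrable K)
    (hK0 : ∀ w, 0 ≤ K w) (hK_even : ∀ w, K (-w) = K w) (hKa : 0 < ∫ w in Icc (-a) a, K w)
    (hR : ∀ x, |smoothedCDF K μ x - smoothedCDF K ν x| ≤ R) :
    kolDist μ ρ * (2 * (∫ w in Icc (-a) a, K w) - ∫ w, K w) ≤
      R + kolDist ν ρ * (∫ w, K w) + 2 * a * B * ∫ w in Icc (-a) a, K w :=
  kolDist_mul_le_of_abs_smoothedCDF_sub_le hρ hK hK0 hK_even hKa fun x =>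
    (abs_sub_le _ (smoothedCDF K ν x) _).trans
      (add_le_add (hR x) (abs_smoothedCDF_sub_le_kolDist_mul hK hK0 x))

lemma kolDist_le_of_one_add_integral_le (hρ : ρ ≤ B • volume) (hK : Integrable K)
    (hK0 : ∀ w, 0 ≤ K w) (hK_even : ∀ w, K (-w) = K w) (ha : 0 ≤ a)
    (hKa : 1 + ∫ w, K w ≤ 2 * ∫ w in Icc (-a) a, K w)
    (hR : ∀ x, |smoothedCDF K μ x - smoothedCDF K ν x| ≤ R) :
    kolDist μ ρ ≤ R + kolDist ν ρ * (∫ w, K w) + 2 * a * B * ∫ w, K w := by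
  have hKa_pos : 0 < ∫ w in Icc (-a) a, K w := by
    linarith [integral_nonneg (μ := volume) (f := K) hK0]
  calc kolDist μ ρ ≤ kolDist μ ρ * (2 * (∫ w in Icc (-a) a, K w) - ∫ w, K w) :=
        le_mul_of_one_le_right (kolDist_nonneg μ ρ) (by linarith)
    _ ≤ R + kolDist ν ρ * (∫ w, K w) + 2 * a * B * ∫ w in Icc (-a) a, K w :=
        kolDist_mul_le_add_kolDist hρ hK hK0 hK_even hKa_pos hR
    _ ≤ R + kolDist ν ρ * (∫ w, K w) + 2 * a * B * ∫ w, K w := by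
        gcongr _ + _ * ?_
        exact setIntegral_le_integral hK (ae_of_all _ hK0)

lemma exists_lt_setIntegral_Icc (hK : Integrable K) {r : ℝ} (hr : r < ∫ w, K w) :
    ∃ a, 0 < a ∧ r < ∫ w in Icc (-a) a, K w := by
  have hlim := intervalIntegral_tendsto_integral hK tendsto_neg_atTop_atBot tendsto_id
  obtain ⟨a, ha, ha0⟩ := ((hlim.eventually (lt_mem_nhds hr)).and (eventually_gt_atTop 0)).exists
  refine ⟨a, ha0, ?_⟩
  rwa [integral_Icc_eq_integral_Ioc, ← intervalIntegral.integral_of_le (neg_le_self ha0.le)]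

end Smoothing

section FejerKernel

/-- The unnormalized Fejér kernel `(1 - cos w) / w²` of the real line, with value `1 / 2` at
`w = 0`. It is the smoothing kernel of the proof because its Fourier transform is supported in
`[-1, 1]`. -/
noncomputable def fejerKernel (w : ℝ) : ℝ :=
  Real.sinc (w / 2) ^ 2 / 2

lemma fejerKernel_of_ne_zero {w : ℝ} (hw : w ≠ 0) :
    fejerKernel w = (1 - Real.cos w) / w ^ 2 := by
  have hcos : Real.cos w = 1 - 2 * Real.sin (w / 2) ^ 2 := by
    rw [← Real.cos_two_mul_eq_one_sub, mul_div_cancel₀ w two_ne_zero]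
  rw [fejerKernel, Real.sinc_of_ne_zero (by positivity), hcos]
  field_simp
  ring

lemma fejerKernel_neg (w : ℝ) : fejerKernel (-w) = fejerKernel w := by
  rw [fejerKernel, neg_div, Real.sinc_neg, fejerKernel]

lemma fejerKernel_nonneg (w : ℝ) : 0 ≤ fejerKernel w :=
  div_nonneg (sq_nonneg _) zero_le_two

lemma continuous_fejerKernel : Continuous fejerKernel :=
  ((Real.continuous_sinc.comp (continuous_id.div_const 2)).pow 2).div_const 2

lemma fejerKernel_le_half (w : ℝ) : fejerKernel w ≤ 1 / 2 :=
  div_le_div_of_nonneg_right ((sq_le_one_iff_abs_le_one _).mpr (Real.abs_sinc_le_one _))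
    zero_le_two

lemma fejerKernel_mul_sq_le_two (w : ℝ) : fejerKernel w * w ^ 2 ≤ 2 := by
  rcases eq_or_ne w 0 with rfl | hw
  · norm_num
  · rw [fejerKernel_of_ne_zero hw, div_mul_cancel₀ _ (pow_ne_zero 2 hw)]
    linarith [Real.neg_one_le_cos w]

lemma integrable_fejerKernel : Integrable fejerKernel := by
  refine (integrable_inv_one_add_sq.const_mul 3).mono' continuous_fejerKernel.aestronglyMeasurable
    (ae_of_all _ fun w => ?_)
  rw [Real.norm_of_nonneg (fejerKernel_nonneg w), ← div_eq_mul_inv, le_div_iff₀ (by positivity)]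
  linarith [fejerKernel_le_half w, fejerKernel_mul_sq_le_two w]

lemma two_div_pi_sq_le_fejerKernel {w : ℝ} (hw : |w| ≤ Real.pi) :
    2 / Real.pi ^ 2 ≤ fejerKernel w := by
  rcases eq_or_ne w 0 with rfl | hw0
  · rw [fejerKernel, zero_div, Real.sinc_zero, one_pow,
      div_le_div_iff₀ (by positivity) two_pos]
    nlinarith [Real.two_le_pi]
  · rw [fejerKernel_of_ne_zero hw0, le_div_iff₀ (by positivity)]
    linarith [Real.cos_le_one_sub_mul_cos_sq hw]

lemma one_lt_integral_fejerKernel : 1 < ∫ w, fejerKernel w :=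
  calc 1 < 4 / Real.pi := (one_lt_div Real.pi_pos).mpr Real.pi_lt_four
    _ = ∫ _ in Icc (-Real.pi) Real.pi, 2 / Real.pi ^ 2 := by
      rw [setIntegral_const, Real.volume_real_Icc_of_le (by linarith [Real.pi_pos]), smul_eq_mul]
      field_simp
      norm_num
    _ ≤ ∫ w in Icc (-Real.pi) Real.pi, fejerKernel w :=
      setIntegral_mono_on (integrableOn_const (by simp)) integrable_fejerKernel.integrableOn
        measurableSet_Icc fun w hw => two_div_pi_sq_le_fejerKernel (abs_le.mpr hw)
    _ ≤ ∫ w, fejerKernel w :=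
      setIntegral_le_integral integrable_fejerKernel (ae_of_all _ fejerKernel_nonneg)

lemma integral_one_sub_mul_exp {c : ℂ} (hc : c ≠ 0) :
    ∫ t in (0 : ℝ)..1, (1 - t) * exp (c * t) = (exp c - 1 - c) / c ^ 2 := by
  have hderiv : ∀ t ∈ uIcc (0 : ℝ) 1, HasDerivAt
      (fun t : ℝ => (1 - t) * (exp (c * t) / c) + exp (c * t) / c ^ 2)
      ((1 - t) * exp (c * t)) t := by
    intro t _
    have hid : HasDerivAt (fun t : ℝ => (t : ℂ)) 1 t := hasDerivAt_id t |>.ofReal_comp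
    have hexp : HasDerivAt (fun t : ℝ => exp (c * t)) (exp (c * t) * (c * 1)) t :=
      (hid.const_mul c).cexp
    refine (((hid.const_sub 1).mul (hexp.div_const c)).add (hexp.div_const (c ^ 2))).congr_deriv ?_
    field_simp
    ring
  rw [intervalIntegral.integral_eq_sub_of_hasDerivAt hderiv
    (Continuous.intervalIntegrable (by fun_prop) _ _)]
  simp only [ofReal_one, sub_self, zero_mul, mul_one, zero_add, ofReal_zero, sub_zero, mul_zero,
    exp_zero, one_mul]
  field_simp
  ring

lemma integral_one_sub_abs_mul_exp {c : ℂ} (hc : c ≠ 0) :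
    ∫ t in (-1 : ℝ)..1, ((1 - |t| : ℝ) : ℂ) * exp (c * t) =
      (exp c + exp (-c) - 2) / c ^ 2 := by
  have hpos : ∫ t in (0 : ℝ)..1, ((1 - |t| : ℝ) : ℂ) * exp (c * t) =
      (exp c - 1 - c) / c ^ 2 := by
    rw [← integral_one_sub_mul_exp hc]
    refine intervalIntegral.integral_congr fun t ht => ?_
    rw [uIcc_of_le zero_le_one] at ht
    simp only [abs_of_nonneg ht.1, ofReal_sub, ofReal_one]
  have hneg : ∫ t in (-1 : ℝ)..0, ((1 - |t| : ℝ) : ℂ) * exp (c * t) =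
      (exp (-c) - 1 + c) / c ^ 2 := by
    have hreflect := intervalIntegral.integral_comp_neg (a := 0) (b := 1)
      fun t : ℝ => ((1 - |t| : ℝ) : ℂ) * exp (c * t)
    rw [neg_zero] at hreflect
    rw [← hreflect, ← sub_neg_eq_add, ← neg_sq c, ← integral_one_sub_mul_exp (neg_ne_zero.mpr hc)]
    refine intervalIntegral.integral_congr fun t ht => ?_
    rw [uIcc_of_le zero_le_one] at ht
    simp only [abs_neg, abs_of_nonneg ht.1, ofReal_sub, ofReal_one, ofReal_neg, mul_neg, neg_mul]
  rw [← intervalIntegral.integral_add_adjacent_intervals (b := 0)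
    (Continuous.intervalIntegrable (by fun_prop) _ _)
    (Continuous.intervalIntegrable (by fun_prop) _ _), hneg, hpos]
  ring

lemma fejerKernel_eq_integral_of_ne_zero {w : ℝ} (hw : w ≠ 0) :
    (fejerKernel w : ℂ) =
      1 / 2 * ∫ t in (-1 : ℝ)..1, ((1 - |t| : ℝ) : ℂ) * exp (-(t * w) * I) := by
  have hc : -(w * I) ≠ 0 := neg_ne_zero.mpr (mul_ne_zero (ofReal_ne_zero.mpr hw) I_ne_zero)
  have hintegral := integral_one_sub_abs_mul_exp hc
  simp only [show ∀ t : ℝ, -(w * I) * t = -(t * w) * I from fun t => by ring] at hintegral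
  rw [hintegral, fejerKernel_of_ne_zero hw, neg_neg, neg_sq, mul_pow, I_sq, ← neg_mul,
    add_comm (exp _), ← two_cos]
  push_cast
  field_simp
  ring

lemma fejerKernel_eq_integral (w : ℝ) :
    (fejerKernel w : ℂ) =
      1 / 2 * ∫ t in (-1 : ℝ)..1, ((1 - |t| : ℝ) : ℂ) * exp (-(t * w) * I) := by
  refine congr_fun (Continuous.ext_on (dense_compl_singleton (0 : ℝ))
    (continuous_ofReal.comp continuous_fejerKernel) ?_
    fun w hw => fejerKernel_eq_integral_of_ne_zero hw) w
  refine continuous_const.mul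
    (intervalIntegral.continuous_parametric_intervalIntegral_of_continuous' ?_ _ _)
  unfold Function.uncurry
  fun_prop

end FejerKernel

section SmoothedDensity

variable (μ ν : Measure ℝ) [IsFiniteMeasure μ] [IsFiniteMeasure ν] {K : ℝ → ℝ}

/-- The density `v ↦ ∫ K(v - u) dμ(u)` of the convolution of `μ` with a kernel `K`. The
smoothed distribution function `smoothedCDF K μ` is its primitive vanishing at `-∞`. -/
noncomputable def smoothedDensity (K : ℝ → ℝ) (μ : Measure ℝ) (v : ℝ) : ℝ :=
  ∫ u, K (v - u) ∂μ

lemma integrable_comp_sub_prod (hK : Integrable K) :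
    Integrable (fun p : ℝ × ℝ => K (p.1 - p.2)) (volume.prod μ) := by
  simpa using (integrable_const (μ := μ) (1 : ℝ)).convolution_integrand
    (ContinuousLinearMap.mul ℝ ℝ) hK

lemma integrable_smoothedDensity (hK : Integrable K) : Integrable (smoothedDensity K μ) :=
  (integrable_comp_sub_prod μ hK).integral_prod_left

lemma setIntegral_Iic_comp_sub_right (K : ℝ → ℝ) (x u : ℝ) :
    ∫ v in Iic x, K (v - u) = ∫ w in Iic (x - u), K w := by
  have hpreimage := (measurePreserving_sub_right volume u).setIntegral_preimage_emb
    (measurableEmbedding_subRight u) K (Iic (x - u))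
  rwa [preimage_sub_const_Iic, sub_add_cancel] at hpreimage

lemma smoothedCDF_eq_setIntegral_smoothedDensity (hK : Integrable K) (x : ℝ) :
    smoothedCDF K μ x = ∫ v in Iic x, smoothedDensity K μ v := by
  have hint : Integrable (fun p : ℝ × ℝ => {q : ℝ × ℝ | q.2 ≤ x - q.1}.indicator
      (fun q => K q.1) p) (volume.prod μ) :=
    (hK.comp_fst μ).indicator
      (measurableSet_le measurable_snd (measurable_const.sub measurable_fst))
  calc smoothedCDF K μ x = ∫ w, ∫ u, (Iic (x - w)).indicator (fun _ => K w) u ∂μ := by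
        simp only [smoothedCDF, integral_indicator_const _ measurableSet_Iic, smul_eq_mul]
    _ = ∫ u, (∫ w, (Iic (x - w)).indicator (fun _ => K w) u) ∂μ := integral_integral_swap hint
    _ = ∫ u, (∫ w in Iic (x - u), K w) ∂μ := by
        simp only [← integral_indicator measurableSet_Iic, indicator_apply, mem_Iic, le_sub_comm]
    _ = ∫ u, (∫ v in Iic x, K (v - u)) ∂μ := by simp only [setIntegral_Iic_comp_sub_right]
    _ = ∫ v in Iic x, smoothedDensity K μ v :=
        (integral_integral_swap (f := fun v u => K (v - u))
          ((integrable_comp_sub_prod μ hK).mono_measure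
            (Measure.prod_mono Measure.restrict_le_self le_rfl))).symm

lemma tendsto_integral_smoothedDensity_sub (hK : Integrable K) (x : ℝ) :
    Tendsto (fun y => ∫ v in y..x, (smoothedDensity K μ v - smoothedDensity K ν v)) atBot
      (𝓝 (smoothedCDF K μ x - smoothedCDF K ν x)) := by
  have hμ := integrable_smoothedDensity μ hK
  have hν := integrable_smoothedDensity ν hK
  rw [smoothedCDF_eq_setIntegral_smoothedDensity μ hK,
    smoothedCDF_eq_setIntegral_smoothedDensity ν hK,
    ← integral_sub hμ.integrableOn hν.integrableOn]
  exact intervalIntegral_tendsto_integral_Iic x (hμ.sub hν).integrableOn tendsto_id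

end SmoothedDensity

section Fourier

variable (μ ν : Measure ℝ) [IsFiniteMeasure μ] [IsFiniteMeasure ν]

lemma integrable_uncurry_one_sub_abs_mul_exp (v : ℝ) :
    Integrable (Function.uncurry fun t u : ℝ =>
      ((1 - |t| : ℝ) : ℂ) * exp ((-(t * (v - u)) : ℝ) * I))
      ((volume.restrict (uIoc (-1) 1)).prod μ) := by
  have htriangle : IntegrableOn (fun t : ℝ => ((1 - |t| : ℝ) : ℂ)) (uIoc (-1) 1) :=
    intervalIntegrable_iff.mp (Continuous.intervalIntegrable (by fun_prop) _ _)
  refine (htriangle.comp_fst μ).mul_bdd (c := 1) (Continuous.aestronglyMeasurable (by fun_prop)) ?_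
  exact ae_of_all _ fun p => (norm_exp_ofReal_mul_I _).le

lemma smoothedDensity_fejerKernel (v : ℝ) :
    (smoothedDensity fejerKernel μ v : ℂ) =
      1 / 2 * ∫ t in (-1 : ℝ)..1, ((1 - |t| : ℝ) : ℂ) * exp (-(t * v) * I) * charFun μ t :=
  calc (smoothedDensity fejerKernel μ v : ℂ)
      = ∫ u, (1 / 2 * ∫ t in (-1 : ℝ)..1,
          ((1 - |t| : ℝ) : ℂ) * exp ((-(t * (v - u)) : ℝ) * I)) ∂μ := by
        refine (integral_ofReal (𝕜 := ℂ)).symm.trans ?_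
        simp only [coe_algebraMap, fejerKernel_eq_integral]
        push_cast
        rfl
    _ = 1 / 2 * ∫ t in (-1 : ℝ)..1, ∫ u,
          ((1 - |t| : ℝ) : ℂ) * exp ((-(t * (v - u)) : ℝ) * I) ∂μ := by
        rw [integral_const_mul,
          intervalIntegral_integral_swap (integrable_uncurry_one_sub_abs_mul_exp μ v)]
    _ = 1 / 2 * ∫ t in (-1 : ℝ)..1,
          ((1 - |t| : ℝ) : ℂ) * exp (-(t * v) * I) * charFun μ t := by
        simp only [charFun_apply_real, ← integral_const_mul, mul_assoc _ (exp _), ← exp_add]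
        refine congrArg _ (intervalIntegral.integral_congr fun t _ => ?_)
        refine congrArg _ (funext fun u => ?_)
        push_cast
        ring_nf

lemma norm_integral_exp_le {t : ℝ} (ht : t ≠ 0) (y x : ℝ) :
    ‖∫ v in y..x, exp (-(t * v) * I)‖ ≤ 2 / |t| := by
  have hc : -(t * I) ≠ 0 := neg_ne_zero.mpr (mul_ne_zero (ofReal_ne_zero.mpr ht) I_ne_zero)
  have hunit (v : ℝ) : ‖exp (-(t * I) * v)‖ = 1 := by
    rw [← norm_exp_ofReal_mul_I (-(t * v))]
    push_cast
    ring_nf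
  simp only [show ∀ v : ℝ, -(t * v) * I = -(t * I) * v from fun v => by ring]
  rw [integral_exp_mul_complex hc, norm_div, norm_neg, norm_mul, norm_I, mul_one, norm_real,
    Real.norm_eq_abs]
  gcongr
  exact (norm_sub_le _ _).trans (by rw [hunit, hunit, one_add_one_eq_two])

lemma smoothedDensity_fejerKernel_sub (v : ℝ) :
    ((smoothedDensity fejerKernel μ v - smoothedDensity fejerKernel ν v : ℝ) : ℂ) =
      1 / 2 * ∫ t in (-1 : ℝ)..1,
        ((1 - |t| : ℝ) : ℂ) * exp (-(t * v) * I) * (charFun μ t - charFun ν t) := by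
  simp only [mul_sub]
  rw [ofReal_sub, smoothedDensity_fejerKernel, smoothedDensity_fejerKernel, ← mul_sub,
    intervalIntegral.integral_sub]
  all_goals exact Continuous.intervalIntegrable (by fun_prop) _ _

lemma integral_smoothedDensity_fejerKernel_sub (y x : ℝ) :
    ((∫ v in y..x, (smoothedDensity fejerKernel μ v - smoothedDensity fejerKernel ν v) : ℝ) : ℂ) =
      1 / 2 * ∫ t in (-1 : ℝ)..1, ((1 - |t| : ℝ) : ℂ) * (∫ v in y..x, exp (-(t * v) * I)) *
        (charFun μ t - charFun ν t) := by
  have hint : IntegrableOn (Function.uncurry fun v t : ℝ =>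
      ((1 - |t| : ℝ) : ℂ) * exp (-(t * v) * I) * (charFun μ t - charFun ν t))
      (uIoc y x ×ˢ uIoc (-1) 1) :=
    ((Continuous.continuousOn (by unfold Function.uncurry; fun_prop)).integrableOn_compact
      (isCompact_uIcc.prod isCompact_uIcc)).mono_set (prod_mono uIoc_subset_uIcc uIoc_subset_uIcc)
  rw [← intervalIntegral.integral_ofReal]
  simp only [smoothedDensity_fejerKernel_sub]
  rw [intervalIntegral.integral_const_mul, intervalIntegral_intervalIntegral_swap hint]
  simp only [intervalIntegral.integral_mul_const, intervalIntegral.integral_const_mul]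

lemma enorm_integral_smoothedDensity_fejerKernel_sub_le (y x : ℝ) :
    ‖∫ v in y..x, (smoothedDensity fejerKernel μ v - smoothedDensity fejerKernel ν v)‖ₑ ≤
      ∫⁻ t in Icc (-1) 1, ‖(charFun μ t - charFun ν t) / t‖ₑ := by
  rw [← ofReal_norm, ← norm_real, ofReal_norm, integral_smoothedDensity_fejerKernel_sub,
    ← intervalIntegral.integral_const_mul, intervalIntegral.integral_of_le (by norm_num),
    ← integral_Icc_eq_integral_Ioc]
  refine (enorm_integral_le_lintegral_enorm _).trans (lintegral_mono_ae ?_)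
  filter_upwards [ae_restrict_mem measurableSet_Icc, Measure.ae_ne _ 0] with t ht ht0
  have hweight : ‖((1 - |t| : ℝ) : ℂ)‖ ≤ 1 := by
    rw [norm_real, Real.norm_of_nonneg (sub_nonneg.mpr (abs_le.mpr ht))]
    linarith [abs_nonneg t]
  rw [enorm_le_iff_norm_le]
  calc ‖1 / 2 * (((1 - |t| : ℝ) : ℂ) * (∫ v in y..x, exp (-(t * v) * I)) *
        (charFun μ t - charFun ν t))‖
      ≤ 1 / 2 * (1 * (2 / |t|) * ‖charFun μ t - charFun ν t‖) := by
        rw [norm_mul, norm_mul, norm_mul]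
        gcongr
        · norm_num
        · exact norm_integral_exp_le ht0 y x
    _ = ‖(charFun μ t - charFun ν t) / t‖ := by
        rw [norm_div, norm_real, Real.norm_eq_abs]
        ring

lemma enorm_smoothedCDF_fejerKernel_sub_le (x : ℝ) :
    ‖smoothedCDF fejerKernel μ x - smoothedCDF fejerKernel ν x‖ₑ ≤
      ∫⁻ t in Icc (-1) 1, ‖(charFun μ t - charFun ν t) / t‖ₑ :=
  le_of_tendsto' (tendsto_integral_smoothedDensity_sub μ ν integrable_fejerKernel x).enorm fun y =>
    enorm_integral_smoothedDensity_fejerKernel_sub_le μ ν y x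

end Fourier

section Scaling

variable {T : ℝ}

lemma map_mul_left_Iic_mul (μ : Measure ℝ) (hT : 0 < T) (x : ℝ) :
    μ.map (T * ·) (Iic (T * x)) = μ (Iic x) := by
  rw [Measure.map_apply (measurable_const_mul T) measurableSet_Iic, preimage_const_mul_Iic₀ _ hT,
    mul_div_cancel_left₀ _ hT.ne']

lemma kolDist_map_mul_left (μ ν : Measure ℝ) (hT : 0 < T) :
    kolDist (μ.map (T * ·)) (ν.map (T * ·)) = kolDist μ ν := by
  rw [kolDist, ← (Equiv.mulLeft₀ T hT.ne').iSup_comp]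
  simp only [Equiv.mulLeft₀_apply, map_mul_left_Iic_mul _ hT, kolDist]

lemma map_mul_left_le_smul_volume {ρ : Measure ℝ} {B : ℝ≥0} (hρ : ρ ≤ B • volume) (hT : 0 < T) :
    ρ.map (T * ·) ≤ (B / T.toNNReal) • volume := by
  refine (Measure.map_mono hρ (measurable_const_mul T)).trans_eq ?_
  rw [Measure.map_smul, Real.map_volume_mul_left hT.ne', abs_of_pos (inv_pos.mpr hT),
    div_eq_mul_inv, mul_smul, ← Real.toNNReal_inv]
  rfl

lemma lintegral_Icc_enorm_comp_mul_left_div (g : ℝ → ℂ) (hT : 0 < T) :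
    ∫⁻ t in Icc (-1) 1, ‖g (T * t) / t‖ₑ = ∫⁻ t in Icc (-T) T, ‖g t / t‖ₑ := by
  have himage : (T * ·) '' Icc (-1) 1 = Icc (-T) T := by
    rw [image_mul_left_Icc hT.le (by norm_num), mul_neg, mul_one]
  rw [← himage, lintegral_image_eq_lintegral_abs_deriv_mul measurableSet_Icc (f' := fun _ => T)
    (fun t _ => (hasDerivAt_const_mul T).hasDerivWithinAt) (mul_right_injective₀ hT.ne').injOn]
  refine lintegral_congr fun t => ?_
  rw [← Real.norm_eq_abs, ← norm_real, ofReal_norm, ← enorm_mul, ofReal_mul, ← mul_div_assoc,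
    mul_div_mul_left _ _ (ofReal_ne_zero.mpr hT.ne')]

end Scaling

lemma exists_kolDist_le_of_abs_smoothedCDF_fejerKernel_sub_le :
    ∃ c : ℝ, 0 < c ∧ ∀ (μ ν ρ : Measure ℝ) [IsFiniteMeasure μ] [IsFiniteMeasure ν]
      [IsFiniteMeasure ρ] (B : ℝ≥0), ρ ≤ B • volume → ∀ R : ℝ,
      (∀ x, |smoothedCDF fejerKernel μ x - smoothedCDF fejerKernel ν x| ≤ R) →
      kolDist μ ρ ≤ (4 * c + 1) * kolDist ν ρ + R + 2 * B * c ^ 2 := by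
  have hmass := one_lt_integral_fejerKernel
  set M := ∫ w, fejerKernel w
  obtain ⟨a, ha, hMa⟩ := exists_lt_setIntegral_Icc integrable_fejerKernel
    (show (1 + M) / 2 < M by linarith)
  refine ⟨M * (1 + a), by positivity, fun μ ν ρ _ _ _ B hρ R hR => ?_⟩
  have hbound := kolDist_le_of_one_add_integral_le hρ integrable_fejerKernel fejerKernel_nonneg
    fejerKernel_neg ha.le (by linarith) hR
  have hδ : kolDist ν ρ * M ≤ (4 * (M * (1 + a)) + 1) * kolDist ν ρ := by
    rw [mul_comm]
    exact mul_le_mul_of_nonneg_right (by nlinarith) (kolDist_nonneg ν ρ)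
  have hB : 2 * a * B * M ≤ 2 * B * (M * (1 + a)) ^ 2 := by
    have haM : a * M ≤ (M * (1 + a)) ^ 2 := by nlinarith [mul_pos ha ha]
    nlinarith [B.coe_nonneg]
  linarith

lemma exists_ofReal_kolDist_le_lintegral_Icc_neg_one_one :
    ∃ c : ℝ, 0 < c ∧ ∀ (μ ν ρ : Measure ℝ) [IsFiniteMeasure μ] [IsFiniteMeasure ν]
      [IsFiniteMeasure ρ] (B : ℝ≥0), ρ ≤ B • volume →
      ENNReal.ofReal (kolDist μ ρ) ≤ ENNReal.ofReal ((4 * c + 1) * kolDist ν ρ) +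
        (∫⁻ t in Icc (-1) 1, ‖(charFun μ t - charFun ν t) / t‖ₑ) +
        ENNReal.ofReal (2 * B * c ^ 2) := by
  obtain ⟨c, hc, hbound⟩ := exists_kolDist_le_of_abs_smoothedCDF_fejerKernel_sub_le
  refine ⟨c, hc, fun μ ν ρ _ _ _ B hρ => ?_⟩
  rcases eq_or_ne (∫⁻ t in Icc (-1) 1, ‖(charFun μ t - charFun ν t) / t‖ₑ) ∞ with htop | hfin
  · simp [htop]
  · have hδ : 0 ≤ (4 * c + 1) * kolDist ν ρ := mul_nonneg (by linarith) (kolDist_nonneg ν ρ)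
    have hreal := hbound μ ν ρ B hρ _ fun x =>
      (ENNReal.ofReal_le_iff_le_toReal hfin).mp <|
        (Real.enorm_eq_ofReal_abs _).symm.trans_le (enorm_smoothedCDF_fejerKernel_sub_le μ ν x)
    rw [← ENNReal.ofReal_toReal hfin, ← ENNReal.ofReal_add hδ ENNReal.toReal_nonneg,
      ← ENNReal.ofReal_add (by positivity) (by positivity)]
    exact ENNReal.ofReal_le_ofReal hreal

lemma charFn_eq_charFun (μ : Measure ℝ) : charFn μ = charFun μ := by
  ext t
  simp only [charFn, charFun_apply_real, ofReal_mul]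

theorem esseen_type_inequality'_general :
    ∃ c : ℝ, 0 < c ∧ ∀ (μ ν ρ : Measure ℝ) [IsFiniteMeasure μ] [IsFiniteMeasure ν]
      [IsFiniteMeasure ρ] (B : ℝ≥0), ρ ≤ B • volume → ∀ T : ℝ, 0 < T →
      ENNReal.ofReal (kolDist μ ρ) ≤ ENNReal.ofReal ((4 * c + 1) * kolDist ν ρ) +
        (∫⁻ t in Icc (-T) T, ‖(charFn μ t - charFn ν t) / t‖ₑ) +
        ENNReal.ofReal (2 * B * c ^ 2 / T) := by
  obtain ⟨c, hc, hbound⟩ := exists_ofReal_kolDist_le_lintegral_Icc_neg_one_one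
  refine ⟨c, hc, fun μ ν ρ _ _ _ B hρ T hT => ?_⟩
  have hscaled := hbound (μ.map (T * ·)) (ν.map (T * ·)) (ρ.map (T * ·)) _
    (map_mul_left_le_smul_volume hρ hT)
  simp only [kolDist_map_mul_left _ _ hT, charFun_map_mul, ← charFn_eq_charFun] at hscaled
  rw [lintegral_Icc_enorm_comp_mul_left_div (fun t => charFn μ t - charFn ν t) hT, NNReal.coe_div,
    Real.coe_toNNReal T hT.le] at hscaled
  convert hscaled using 3
  ring

/-- **Lemma 2.6, second inequality**: there is an absolute constant `c > 0` so that for any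
real random variables `X, Y` (given by their laws) and any `Z` with a bounded Lebesgue
density `f_Z`, for every `T > 0`,
`d_K(X,Z) ≤ (4c+1) d_K(Y,Z) + ∫_{−T}^{T} |(φ_X(t) − φ_Y(t))/t| dt + 2‖f_Z‖_∞ c²/T`
(the middle integral being a Lebesgue integral with values in `[0,∞]`). -/
theorem esseen_type_inequality' :
    ∃ c : ℝ, 0 < c ∧
      ∀ (μX μY μZ : Measure ℝ), IsProbabilityMeasure μX → IsProbabilityMeasure μY →
      ∀ (fZ : ℝ → ℝ) (B : ℝ), Measurable fZ → (∀ x, 0 ≤ fZ x) → (∀ x, fZ x ≤ B) →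
      μZ = MeasureTheory.volume.withDensity (fun x => ENNReal.ofReal (fZ x)) →
      IsProbabilityMeasure μZ →
      ∀ T : ℝ, 0 < T →
        ENNReal.ofReal (kolDist μX μZ) ≤
          ENNReal.ofReal ((4 * c + 1) * kolDist μY μZ) +
            (∫⁻ t in Set.Icc (-T) T, (‖(charFn μX t - charFn μY t) / (t : ℂ)‖₊ : ℝ≥0∞)) +
            ENNReal.ofReal (2 * B * c ^ 2 / T) := by
  obtain ⟨c, hc, hbound⟩ := esseen_type_inequality'_general
  refine ⟨c, hc, fun μX μY μZ _ _ fZ B _ hf0 hfB hμZ _ T hT => ?_⟩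
  lift B to ℝ≥0 using (hf0 0).trans (hfB 0)
  refine hbound μX μY μZ B ?_ T hT
  calc μZ ≤ volume.withDensity fun _ => (B : ℝ≥0∞) :=
        hμZ.trans_le (withDensity_mono (ae_of_all _ fun x => ENNReal.ofReal_le_coe.mpr (hfB x)))
    _ = B • volume := withDensity_const _
end

section
/- Let (E, 𝓕, μ) be a probability space, (𝒳_i)_{i≥0} measurable spaces, X_i : E → 𝒳_i measurable, 𝒴_n = ∏_{j≥n} 𝒳_j and X̄_n(x) = (X_n(x), X_{n+1}(x), ...). Let (δ_n) be nonnegative reals with δ_n → 0, and let r : E → [0,∞) with ∫ r dμ = 1 satisfy the decorrelation property with constant K ≥ 0 relative to (δ_n). Let g_j : 𝒴_j → ℝ^d be measurable, S_n = Σ_{j=0}^{n-1} g_j∘X̄_j, with ∫|S_n| dμ < ∞ and ∫ r·|S_n| dμ < ∞ for all n, and let (b_n) be positive reals with b_n → ∞. Then for every m ≥ 1, every 0 < s₁ ≤ s₂ ≤ ... ≤ s_m, and every t = (t₁, ..., t_m) ∈ (ℝ^d)^m, lim_{n→∞} | ∫ r(x) exp( i Σ_{k=1}^m ⟨t_k,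 S_{[n s_k]}(x)⟩ / b_n ) dμ(x) − ∫ exp( i Σ_{k=1}^m ⟨t_k, S_{[n s_k]}(x)⟩ / b_n ) dμ(x) | = 0. In particular, the finite-dimensional distributions of the process t ↦ S_{[nt]}/b_n at times s₁, ..., s_m converge weakly under μ if and only if they converge weakly under ν = r dμ, with the same limit. -/
open MeasureTheory Filter Topology Complex
open scoped BigOperators ENNReal RealInnerProductSpace

/-- `X̄ₙ(x) = (Xₙ(x), Xₙ₊₁(x), ...)`. -/
def Xbar {E : Type*} {𝒳 : ℕ → Type*} (X : ∀ i, E → 𝒳 i) (n : ℕ) (x : E) :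
    ∀ j, 𝒳 (n + j) := fun j => X (n + j) x

/-- The decorrelation property with constant `K` relative to the rates `δ`: for every `n`
and every bounded measurable `f : 𝒴ₙ → ℂ`,
`|∫ s·(f∘X̄ₙ) dμ − ∫ s dμ · ∫ f∘X̄ₙ dμ| ≤ K · sup|f| · δₙ`. -/
def Decorrelates {E : Type*} [MeasurableSpace E] (μ : Measure E) {𝒳 : ℕ → Type*}
    [∀ i, MeasurableSpace (𝒳 i)] (X : ∀ i, E → 𝒳 i) (s : E → ℝ) (K : ℝ) (δ : ℕ → ℝ) : Prop :=
  ∀ (n : ℕ) (f : (∀ j, 𝒳 (n + j)) → ℂ) (C : ℝ), Measurable f → (∀ y, ‖f y‖ ≤ C) →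
    ‖(∫ x, (s x : ℂ) * f (Xbar X n x) ∂μ) -
        ((∫ x, s x ∂μ : ℝ) : ℂ) * ∫ x, f (Xbar X n x) ∂μ‖ ≤ K * C * δ n

/-- Convergence in distribution (weak convergence of laws) of `Wₙ` under `μ` towards `P`. -/
def TendstoInDistribution {E G : Type*} [MeasurableSpace E] [TopologicalSpace G] [MeasurableSpace G]
    (μ : Measure E) (W : ℕ → E → G) (P : Measure G) : Prop :=
  ∀ h : BoundedContinuousFunction G ℝ,
    Tendsto (fun n => ∫ x, h (W n x) ∂μ) atTop (𝓝 (∫ y, h y ∂P))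

/-!
Discarding the first `N` terms changes `S_p / bₙ` by `S_{min N p} / bₙ`, which tends to `0` for
fixed `N`, uniformly in `p`, because `bₙ → ∞`. The truncated sums are functions of `X̄_N`, so their
covariance with `r` is `O(δ_N)` uniformly in `n`; letting first `n → ∞` and then `N → ∞`, the
covariance of `r` with any bounded uniformly continuous function of the rescaled sums tends to `0`.
Exponentials give the characteristic functions, Lipschitz functions the weak convergence.
-/

section Shift

variable {E : Type*} {𝒳 : ℕ → Type*} [∀ i, MeasurableSpace (𝒳 i)] {X : ∀ i, E → 𝒳 i}

lemma measurable_Xbar [MeasurableSpace E] (hX : ∀ i, Measurable (X i)) (n : ℕ) :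
    Measurable (Xbar X n) :=
  measurable_pi_lambda _ fun j => hX (n + j)

lemma measurable_comap_Xbar {N j : ℕ} (hNj : N ≤ j) :
    Measurable[MeasurableSpace.comap (Xbar X N) inferInstance] (Xbar X j) := by
  have hcoord (k) (hNk : N ≤ k) :
      Measurable[MeasurableSpace.comap (Xbar X N) inferInstance] (X k) := by
    obtain ⟨l, rfl⟩ := Nat.exists_eq_add_of_le hNk
    exact (measurable_pi_apply l).comp (comap_measurable (Xbar X N))
  exact @measurable_pi_lambda _ _ _ (_) _ _ fun i =>
    hcoord (j + i) (hNj.trans (Nat.le_add_right j i))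

end Shift

section BlockSum

variable {E : Type*} {𝒳 : ℕ → Type*} {G : Type*}

/-- The sum of `g_j ∘ X̄_j` over `N ≤ j < n`, so that `S_n` is `blockSum X g 0 n`; it is `0` when
`n ≤ N`. -/
def blockSum [AddCommMonoid G] (X : ∀ i, E → 𝒳 i) (g : ∀ j, (∀ i, 𝒳 (j + i)) → G) (N n : ℕ)
    (x : E) : G :=
  ∑ j ∈ Finset.Ico N n, g j (Xbar X j x)

lemma measurable_comap_blockSum [∀ i, MeasurableSpace (𝒳 i)] [AddCommMonoid G] [MeasurableSpace G]
    [MeasurableAdd₂ G] (X : ∀ i, E → 𝒳 i) {g : ∀ j, (∀ i, 𝒳 (j + i)) → G}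
    (hg : ∀ j, Measurable (g j)) (N n : ℕ) :
    Measurable[MeasurableSpace.comap (Xbar X N) inferInstance] (blockSum X g N n) :=
  Finset.measurable_fun_sum _ fun j hj =>
    (hg j).comp (measurable_comap_Xbar (Finset.mem_Ico.1 hj).1)

lemma blockSum_zero_sub_blockSum [AddCommGroup G] (X : ∀ i, E → 𝒳 i)
    (g : ∀ j, (∀ i, 𝒳 (j + i)) → G) (N n : ℕ) (x : E) :
    blockSum X g 0 n x - blockSum X g N n x = blockSum X g 0 (min N n) x := by
  unfold blockSum
  rcases le_total N n with h | h
  · rw [min_eq_left h, ← Finset.sum_Ico_consecutive _ N.zero_le h, add_sub_cancel_right]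
  · rw [min_eq_right h, Finset.Ico_eq_empty_of_le h, Finset.sum_empty, sub_zero]

lemma tendsto_smul_min_zero [NormedAddCommGroup G] [NormedSpace ℝ G] {c : ℕ → ℝ}
    (hc : Tendsto c atTop (𝓝 0)) (u : ℕ → G) (N : ℕ) (p : ℕ → ℕ) :
    Tendsto (fun n => c n • u (min N (p n))) atTop (𝓝 0) := by
  refine NormedField.tendsto_zero_smul_of_tendsto_zero_of_bounded hc
    (isBoundedUnder_of ⟨∑ i ∈ Finset.range (N + 1), ‖u i‖, fun n => ?_⟩)
  exact Finset.single_le_sum (f := fun i => ‖u i‖) (fun _ _ => norm_nonneg _)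
    (Finset.mem_range_succ_iff.2 (min_le_left N (p n)))

lemma tendsto_smul_blockSum_sub_zero [NormedAddCommGroup G] [NormedSpace ℝ G] {ι : Type*}
    {c : ℕ → ℝ} (hc : Tendsto c atTop (𝓝 0)) (X : ∀ i, E → 𝒳 i)
    (g : ∀ j, (∀ i, 𝒳 (j + i)) → G) (p : ℕ → ι → ℕ) (N : ℕ) (x : E) :
    Tendsto (fun n => (fun k => c n • blockSum X g 0 (p n k) x) -
      fun k => c n • blockSum X g N (p n k) x) atTop (𝓝 0) := by
  refine tendsto_pi_nhds.2 fun k => ?_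
  simp only [Pi.sub_apply, ← smul_sub, blockSum_zero_sub_blockSum]
  exact tendsto_smul_min_zero hc (fun i => blockSum X g 0 i x) N fun n => p n k

end BlockSum

section Covariance

variable {E : Type*} [MeasurableSpace E] {μ : Measure E} {r : E → ℝ}

/-- The covariance of a real weight `r` and a complex observable `f` under `μ`, the quantity that
`Decorrelates` controls. -/
noncomputable def complexCovariance (μ : Measure E) (r : E → ℝ) (f : E → ℂ) : ℂ :=
  (∫ x, (r x : ℂ) * f x ∂μ) - ((∫ x, r x ∂μ : ℝ) : ℂ) * ∫ x, f x ∂μ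

lemma complexCovariance_sub {f₁ f₂ : E → ℂ} (hf₁ : Integrable f₁ μ) (hf₂ : Integrable f₂ μ)
    (hrf₁ : Integrable (fun x => (r x : ℂ) * f₁ x) μ)
    (hrf₂ : Integrable (fun x => (r x : ℂ) * f₂ x) μ) :
    complexCovariance μ r (fun x => f₁ x - f₂ x) =
      complexCovariance μ r f₁ - complexCovariance μ r f₂ := by
  simp only [complexCovariance, mul_sub]
  rw [integral_sub hrf₁ hrf₂, integral_sub hf₁ hf₂]
  ring

lemma tendsto_complexCovariance_zero [IsFiniteMeasure μ] (hr : Integrable r μ)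
    {f : ℕ → E → ℂ} {C : ℝ} (hf : ∀ n, AEStronglyMeasurable (f n) μ)
    (hC : ∀ n, ∀ᵐ x ∂μ, ‖f n x‖ ≤ C)
    (hlim : ∀ᵐ x ∂μ, Tendsto (fun n => f n x) atTop (𝓝 0)) :
    Tendsto (fun n => complexCovariance μ r (f n)) atTop (𝓝 0) := by
  have hweighted : Tendsto (fun n => ∫ x, (r x : ℂ) * f n x ∂μ) atTop (𝓝 0) := by
    have hr_ofReal : Integrable (fun x => (r x : ℂ)) μ := hr.ofReal
    have hrC (n) : ∀ᵐ x ∂μ, ‖(r x : ℂ) * f n x‖ ≤ ‖r x‖ * C := by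
      filter_upwards [hC n] with x hx
      rw [norm_mul, Complex.norm_real]
      exact mul_le_mul_of_nonneg_left hx (norm_nonneg _)
    simpa only [Pi.mul_apply, mul_zero, integral_zero] using
      tendsto_integral_of_dominated_convergence (fun x => ‖r x‖ * C)
        (fun n => hr_ofReal.aestronglyMeasurable.mul (hf n)) (hr.norm.mul_const C) hrC
        (hlim.mono fun x hx => hx.const_mul (r x : ℂ))
  have hplain : Tendsto (fun n => ∫ x, f n x ∂μ) atTop (𝓝 0) := by
    simpa only [integral_zero] using
      tendsto_integral_of_dominated_convergence (fun _ => C) hf (integrable_const C) hC hlim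
  simpa only [complexCovariance, mul_zero, sub_zero] using
    hweighted.sub (hplain.const_mul ((∫ x, r x ∂μ : ℝ) : ℂ))

end Covariance

namespace Decorrelates

variable {E : Type*} [MeasurableSpace E] {μ : Measure E} {𝒳 : ℕ → Type*}
  [∀ i, MeasurableSpace (𝒳 i)] {X : ∀ i, E → 𝒳 i} {r : E → ℝ} {K : ℝ} {δ : ℕ → ℝ}

lemma norm_complexCovariance_le (hdec : Decorrelates μ X r K δ) {N : ℕ} {f : E → ℂ} {C : ℝ}
    (hC0 : 0 ≤ C) (hf : Measurable[MeasurableSpace.comap (Xbar X N) inferInstance] f)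
    (hC : ∀ x, ‖f x‖ ≤ C) :
    ‖complexCovariance μ r f‖ ≤ K * C * δ N := by
  obtain ⟨F, hF, rfl⟩ := hf.exists_eq_measurable_comp
  -- `F` is bounded only on the range of `X̄_N`, so it is cut off elsewhere.
  set B := {y | ‖F y‖ ≤ C}
  have hBF : Measurable (B.indicator F) := hF.indicator (measurableSet_le hF.norm measurable_const)
  have hBFC (y) : ‖B.indicator F y‖ ≤ C := by
    rw [norm_indicator_eq_indicator_norm]
    exact Set.indicator_apply_le' id fun _ => hC0
  have hcomp (x) : B.indicator F (Xbar X N x) = (F ∘ Xbar X N) x :=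
    Set.indicator_of_mem (s := B) (hC x) F
  simpa only [complexCovariance, hcomp] using hdec N (B.indicator F) C hBF hBFC

lemma tendsto_complexCovariance_of_approx [IsFiniteMeasure μ] (hdec : Decorrelates μ X r K δ)
    (hδ : Tendsto δ atTop (𝓝 0)) (hr : Integrable r μ) (hX : ∀ i, Measurable (X i))
    {f : ℕ → E → ℂ} {V : ℕ → ℕ → E → ℂ} {C : ℝ} (hC0 : 0 ≤ C)
    (hf : ∀ n, AEStronglyMeasurable (f n) μ) (hfC : ∀ n, ∀ᵐ x ∂μ, ‖f n x‖ ≤ C)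
    (hV : ∀ N n, Measurable[MeasurableSpace.comap (Xbar X N) inferInstance] (V N n))
    (hVC : ∀ N n x, ‖V N n x‖ ≤ C)
    (hlim : ∀ N, ∀ᵐ x ∂μ, Tendsto (fun n => f n x - V N n x) atTop (𝓝 0)) :
    Tendsto (fun n => complexCovariance μ r (f n)) atTop (𝓝 0) := by
  have hV_meas (N n) : AEStronglyMeasurable (V N n) μ :=
    ((hV N n).mono (measurable_Xbar hX N).comap_le le_rfl).aestronglyMeasurable
  have hVC_ae (N n) : ∀ᵐ x ∂μ, ‖V N n x‖ ≤ C := ae_of_all _ (hVC N n)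
  have hsub (N n) : complexCovariance μ r (fun x => f n x - V N n x) =
      complexCovariance μ r (f n) - complexCovariance μ r (V N n) :=
    complexCovariance_sub (.of_bound (hf n) C (hfC n)) (.of_bound (hV_meas N n) C (hVC_ae N n))
      (hr.ofReal.mul_bdd (hf n) (hfC n)) (hr.ofReal.mul_bdd (hV_meas N n) (hVC_ae N n))
  have herror (N) : Tendsto
      (fun n => complexCovariance μ r (f n) - complexCovariance μ r (V N n)) atTop (𝓝 0) := by
    simp only [← hsub]
    refine tendsto_complexCovariance_zero (C := C + C) hr (fun n => (hf n).sub (hV_meas N n))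
      (fun n => ?_) (hlim N)
    filter_upwards [hfC n] with x hx
    exact norm_sub_le_of_le hx (hVC N n x)
  rw [NormedAddGroup.tendsto_nhds_zero]
  intro ε hε
  have hbound : Tendsto (fun N => K * C * δ N) atTop (𝓝 0) := by
    simpa only [mul_zero] using hδ.const_mul (K * C)
  obtain ⟨N, hN⟩ := (hbound.eventually_lt_const (half_pos hε)).exists
  filter_upwards [NormedAddGroup.tendsto_nhds_zero.1 (herror N) (ε / 2) (half_pos hε)] with n hn
  calc ‖complexCovariance μ r (f n)‖
      ≤ ‖complexCovariance μ r (f n) - complexCovariance μ r (V N n)‖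
          + ‖complexCovariance μ r (V N n)‖ := norm_le_norm_sub_add _ _
    _ < ε / 2 + ε / 2 :=
        add_lt_add hn ((hdec.norm_complexCovariance_le hC0 (hV N n) (hVC N n)).trans_lt hN)
    _ = ε := add_halves ε

lemma tendsto_complexCovariance_comp_smul_blockSum [IsFiniteMeasure μ]
    (hdec : Decorrelates μ X r K δ) (hδ : Tendsto δ atTop (𝓝 0)) (hr : Integrable r μ)
    (hX : ∀ i, Measurable (X i)) {G : Type*} [NormedAddCommGroup G] [NormedSpace ℝ G]
    [MeasurableSpace G] [BorelSpace G] [SecondCountableTopology G]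
    {g : ∀ j, (∀ i, 𝒳 (j + i)) → G} (hg : ∀ j, Measurable (g j))
    {c : ℕ → ℝ} (hc : Tendsto c atTop (𝓝 0)) {ι : Type*} [Countable ι] (p : ℕ → ι → ℕ)
    {h : (ι → G) → ℂ} (hh : UniformContinuous h) {C : ℝ} (hC : ∀ w, ‖h w‖ ≤ C) :
    Tendsto (fun n => complexCovariance μ r
      fun x => h fun k => c n • blockSum X g 0 (p n k) x) atTop (𝓝 0) := by
  have hV (N n) : Measurable[MeasurableSpace.comap (Xbar X N) inferInstance]
      fun x => h fun k => c n • blockSum X g N (p n k) x :=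
    hh.continuous.measurable.comp <| @measurable_pi_lambda _ _ _ (_) _ _ fun k =>
      (measurable_comap_blockSum X hg N (p n k)).const_smul (c n)
  refine hdec.tendsto_complexCovariance_of_approx hδ hr hX ((norm_nonneg _).trans (hC 0))
    (fun n => ((hV 0 n).mono (measurable_Xbar hX 0).comap_le le_rfl).aestronglyMeasurable)
    (fun n => ae_of_all _ fun x => hC _) hV (fun N n x => hC _) fun N => ae_of_all _ fun x => ?_
  have hclose : Tendsto (fun n => ((fun k => c n • blockSum X g N (p n k) x),
      fun k => c n • blockSum X g 0 (p n k) x)) atTop (uniformity (ι → G)) := by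
    rw [uniformity_eq_comap_nhds_zero, tendsto_comap_iff]
    exact tendsto_smul_blockSum_sub_zero hc X g p N x
  have hhclose := Tendsto.comp hh hclose
  rwa [uniformity_eq_comap_nhds_zero, tendsto_comap_iff] at hhclose

end Decorrelates

section CharacteristicFunction

lemma uniformContinuous_exp_ofReal_mul_I :
    UniformContinuous fun a : ℝ => Complex.exp (a * Complex.I) := by
  refine (LipschitzWith.of_dist_le_mul (K := 1) fun a c => ?_).uniformContinuous
  have hfactor : Complex.exp (a * I) - Complex.exp (c * I) =
      Complex.exp (c * I) * (Complex.exp (I * (a - c : ℝ)) - 1) := by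
    rw [mul_sub, ← Complex.exp_add, mul_one]
    congr 2
    push_cast
    ring
  rw [dist_eq_norm, hfactor, norm_mul, Complex.norm_exp_ofReal_mul_I, NNReal.coe_one]
  exact mul_le_mul_of_nonneg_left Real.norm_exp_I_mul_ofReal_sub_one_le zero_le_one

lemma uniformContinuous_exp_sum_inner_mul_I {ι G : Type*} [Fintype ι] [NormedAddCommGroup G]
    [InnerProductSpace ℝ G] (t : ι → G) :
    UniformContinuous fun w : ι → G => Complex.exp ((∑ k, ⟪t k, w k⟫ : ℝ) * Complex.I) := by
  let L : (ι → G) →L[ℝ] ℝ := ∑ k, (innerSL ℝ (t k)).comp (ContinuousLinearMap.proj k)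
  have hL (w : ι → G) : L w = ∑ k, ⟪t k, w k⟫ := by
    simp [L]
  simpa only [Function.comp_def, hL] using
    uniformContinuous_exp_ofReal_mul_I.comp L.uniformContinuous

end CharacteristicFunction

section ChangeOfMeasure

variable {E : Type*} [MeasurableSpace E] {μ : Measure E} {r : E → ℝ}

lemma isProbabilityMeasure_withDensity_ofReal (hr : Integrable r μ) (hr0 : 0 ≤ᵐ[μ] r)
    (hr1 : ∫ x, r x ∂μ = 1) :
    IsProbabilityMeasure (μ.withDensity fun x => ENNReal.ofReal (r x)) := by
  constructor
  rw [withDensity_apply _ MeasurableSet.univ, Measure.restrict_univ,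
    ← ofReal_integral_eq_lintegral_ofReal hr hr0, hr1, ENNReal.ofReal_one]

lemma integral_withDensity_ofReal_eq_integral_smul {F : Type*} [NormedAddCommGroup F]
    [NormedSpace ℝ F] (hr : AEMeasurable r μ) (hr0 : 0 ≤ᵐ[μ] r) (f : E → F) :
    ∫ x, f x ∂μ.withDensity (fun x => ENNReal.ofReal (r x)) = ∫ x, r x • f x ∂μ := by
  rw [integral_withDensity_eq_integral_toReal_smul₀ hr.ennreal_ofReal
    (ae_of_all _ fun x => ENNReal.ofReal_lt_top)]
  refine integral_congr_ae (hr0.mono fun x hx => ?_)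
  simp only [ENNReal.toReal_ofReal hx]

lemma ofReal_integral_withDensity_sub_integral (hr : AEMeasurable r μ) (hr0 : 0 ≤ᵐ[μ] r)
    (hr1 : ∫ x, r x ∂μ = 1) (f : E → ℝ) :
    ((∫ x, f x ∂μ.withDensity (fun x => ENNReal.ofReal (r x)) - ∫ x, f x ∂μ : ℝ) : ℂ) =
      complexCovariance μ r fun x => f x := by
  rw [integral_withDensity_ofReal_eq_integral_smul hr hr0, complexCovariance, hr1, ofReal_one,
    one_mul, ofReal_sub, ← integral_complex_ofReal, ← integral_complex_ofReal]
  simp only [smul_eq_mul, ofReal_mul]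

end ChangeOfMeasure

namespace TendstoInDistribution

variable {E G : Type*} [MeasurableSpace E] [MeasurableSpace G]

lemma unique [TopologicalSpace G] [HasOuterApproxClosed G] [BorelSpace G] {μ : Measure E}
    {W : ℕ → E → G} {P Q : Measure G} [IsFiniteMeasure P] [IsFiniteMeasure Q]
    (hP : TendstoInDistribution μ W P) (hQ : TendstoInDistribution μ W Q) : P = Q :=
  ext_of_forall_integral_eq_of_IsFiniteMeasure fun h => tendsto_nhds_unique (hP h) (hQ h)

variable [PseudoEMetricSpace G] [BorelSpace G] {W : ℕ → E → G}

lemma iff_forall_lipschitz {μ : Measure E} [IsProbabilityMeasure μ]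
    (hW : ∀ n, Measurable (W n)) (P : Measure G) [IsProbabilityMeasure P] :
    TendstoInDistribution μ W P ↔
      ∀ f : G → ℝ, (∃ C : ℝ, ∀ x y, dist (f x) (f y) ≤ C) → (∃ L, LipschitzWith L f) →
        Tendsto (fun n => ∫ x, f (W n x) ∂μ) atTop (𝓝 (∫ y, f y ∂P)) := by
  let law (n : ℕ) : ProbabilityMeasure G :=
    ⟨μ.map (W n), Measure.isProbabilityMeasure_map (hW n).aemeasurable⟩
  let limit : ProbabilityMeasure G := ⟨P, inferInstance⟩
  have hlaw (f : G → ℝ) (hf : Continuous f) (n) :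
      ∫ y, f y ∂(law n : Measure G) = ∫ x, f (W n x) ∂μ :=
    integral_map (hW n).aemeasurable hf.measurable.aestronglyMeasurable
  calc TendstoInDistribution μ W P
      ↔ Tendsto law atTop (𝓝 limit) := by
        simp only [ProbabilityMeasure.tendsto_iff_forall_integral_tendsto,
          hlaw _ (BoundedContinuousFunction.continuous _)]
        rfl
    _ ↔ _ := by
        rw [tendsto_iff_forall_lipschitz_integral_tendsto]
        refine forall₃_congr fun f _ ⟨L, hL⟩ => ?_
        simp only [hlaw f hL.continuous]
        rfl

lemma congr_of_tendsto_integral_sub {μ ν : Measure E} [IsProbabilityMeasure μ]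
    [IsProbabilityMeasure ν] (hW : ∀ n, Measurable (W n))
    (hsub : ∀ f : G → ℝ, (∃ C : ℝ, ∀ x y, dist (f x) (f y) ≤ C) → (∃ L, LipschitzWith L f) →
      Tendsto (fun n => ∫ x, f (W n x) ∂ν - ∫ x, f (W n x) ∂μ) atTop (𝓝 0))
    (P : Measure G) [IsProbabilityMeasure P] :
    TendstoInDistribution μ W P ↔ TendstoInDistribution ν W P := by
  rw [iff_forall_lipschitz hW P, iff_forall_lipschitz hW P]
  refine forall₃_congr fun f hC hL => ⟨fun hμ => ?_, fun hν => ?_⟩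
  · simpa only [sub_add_cancel, zero_add] using (hsub f hC hL).add hμ
  · simpa only [sub_sub_cancel, sub_zero] using hν.sub (hsub f hC hL)

end TendstoInDistribution

section Eagleson

variable {E : Type*} [MeasurableSpace E] {μ : Measure E}
  {𝒳 : ℕ → Type*} [∀ i, MeasurableSpace (𝒳 i)] {X : ∀ i, E → 𝒳 i} {r : E → ℝ} {K : ℝ} {δ : ℕ → ℝ}
  {G : Type*} [NormedAddCommGroup G] [MeasurableSpace G] [BorelSpace G]
  [SecondCountableTopology G] {g : ∀ j, (∀ i, 𝒳 (j + i)) → G} {c : ℕ → ℝ} {ι : Type*}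

lemma Decorrelates.tendsto_norm_charFun_sub [IsFiniteMeasure μ] [InnerProductSpace ℝ G]
    [Fintype ι] (hdec : Decorrelates μ X r K δ) (hδ : Tendsto δ atTop (𝓝 0))
    (hr1 : ∫ x, r x ∂μ = 1) (hX : ∀ i, Measurable (X i)) (hg : ∀ j, Measurable (g j))
    (hc : Tendsto c atTop (𝓝 0)) (p : ℕ → ι → ℕ) (t : ι → G) :
    Tendsto (fun n =>
        ‖(∫ x, (r x : ℂ) *
              Complex.exp ((∑ k, ⟪t k, c n • blockSum X g 0 (p n k) x⟫ : ℝ) * Complex.I) ∂μ) -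
            ∫ x, Complex.exp ((∑ k, ⟪t k, c n • blockSum X g 0 (p n k) x⟫ : ℝ) * Complex.I) ∂μ‖)
      atTop (𝓝 0) := by
  have hr : Integrable r μ := .of_integral_ne_zero (hr1 ▸ one_ne_zero)
  simpa only [complexCovariance, hr1, ofReal_one, one_mul, norm_zero] using
    (hdec.tendsto_complexCovariance_comp_smul_blockSum hδ hr hX hg hc p
      (uniformContinuous_exp_sum_inner_mul_I t)
      fun w => (Complex.norm_exp_ofReal_mul_I _).le).norm

lemma Decorrelates.tendstoInDistribution_withDensity_iff [IsProbabilityMeasure μ] [NormedSpace ℝ G]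
    [Finite ι] (hdec : Decorrelates μ X r K δ) (hδ : Tendsto δ atTop (𝓝 0)) (hr0 : 0 ≤ᵐ[μ] r)
    (hr1 : ∫ x, r x ∂μ = 1) (hX : ∀ i, Measurable (X i)) (hg : ∀ j, Measurable (g j))
    (hc : Tendsto c atTop (𝓝 0)) (p : ℕ → ι → ℕ) (P : Measure (ι → G)) [IsProbabilityMeasure P] :
    TendstoInDistribution μ (fun n x k => c n • blockSum X g 0 (p n k) x) P ↔
      TendstoInDistribution (μ.withDensity fun x => ENNReal.ofReal (r x))
        (fun n x k => c n • blockSum X g 0 (p n k) x) P := by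
  have hr : Integrable r μ := .of_integral_ne_zero (hr1 ▸ one_ne_zero)
  have := isProbabilityMeasure_withDensity_ofReal hr hr0 hr1
  have hW (n) : Measurable fun x k => c n • blockSum X g 0 (p n k) x :=
    measurable_pi_lambda _ fun k => ((measurable_comap_blockSum X hg 0 (p n k)).mono
      (measurable_Xbar hX 0).comap_le le_rfl).const_smul (c n)
  have := Fintype.ofFinite ι
  refine TendstoInDistribution.congr_of_tendsto_integral_sub hW ?_ P
  rintro f ⟨C, hC⟩ ⟨L, hL⟩
  rw [← tendsto_ofReal_iff, ofReal_zero]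
  simp only [ofReal_integral_withDensity_sub_integral hr.aemeasurable hr0 hr1]
  refine hdec.tendsto_complexCovariance_comp_smul_blockSum hδ hr hX hg hc p
    (h := fun w => (f w : ℂ)) (C := C + ‖f 0‖)
    (Complex.isometry_ofReal.uniformContinuous.comp hL.uniformContinuous) fun w => ?_
  calc ‖(f w : ℂ)‖ = ‖f w‖ := Complex.norm_real _
    _ ≤ ‖f w - f 0‖ + ‖f 0‖ := norm_le_norm_sub_add _ _
    _ ≤ C + ‖f 0‖ := add_le_add_left (dist_eq_norm (f w) (f 0) ▸ hC w 0) _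

end Eagleson

theorem eagleson_fdd_general
    {E : Type*} [MeasurableSpace E] (μ : Measure E) [IsProbabilityMeasure μ]
    {𝒳 : ℕ → Type*} [∀ i, MeasurableSpace (𝒳 i)]
    (X : ∀ i, E → 𝒳 i) (hX : ∀ i, Measurable (X i))
    (δ : ℕ → ℝ) (hδ : Tendsto δ atTop (𝓝 0))
    (r : E → ℝ) (hr0 : 0 ≤ᵐ[μ] r) (hr1 : ∫ x, r x ∂μ = 1)
    (K : ℝ) (hdec : Decorrelates μ X r K δ)
    (ν : Measure E) (hν : ν = μ.withDensity (fun x => ENNReal.ofReal (r x)))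
    {G : Type*} [NormedAddCommGroup G] [InnerProductSpace ℝ G] [MeasurableSpace G] [BorelSpace G]
    [SecondCountableTopology G]
    (g : ∀ j, (∀ i, 𝒳 (j + i)) → G) (hg : ∀ j, Measurable (g j))
    (S : ℕ → E → G) (hS : ∀ n x, S n x = ∑ j ∈ Finset.range n, g j (Xbar X j x))
    (b : ℕ → ℝ) (hb : Tendsto b atTop atTop)
    {ι : Type*} [Fintype ι] (p : ℕ → ι → ℕ) :
    (∀ t : ι → G,
      Tendsto (fun n : ℕ =>
        ‖(∫ x, (r x : ℂ) * Complex.exp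
              (((∑ k, ⟪t k, S (p n k) x⟫) / b n : ℝ) * Complex.I) ∂μ) -
            ∫ x, Complex.exp (((∑ k, ⟪t k, S (p n k) x⟫) / b n : ℝ) * Complex.I) ∂μ‖)
        atTop (𝓝 0)) ∧
    ∀ P : Measure (ι → G), IsProbabilityMeasure P →
      (TendstoInDistribution μ (fun n x k => (b n)⁻¹ • S (p n k) x) P ↔
        TendstoInDistribution ν (fun n x k => (b n)⁻¹ • S (p n k) x) P) := by
  have hc : Tendsto (fun n => (b n)⁻¹) atTop (𝓝 0) := tendsto_inv_atTop_zero.comp hb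
  obtain rfl : S = blockSum X g 0 := by
    ext n x
    rw [hS, blockSum, Finset.range_eq_Ico]
  subst hν
  refine ⟨fun t => ?_, fun P _ =>
    hdec.tendstoInDistribution_withDensity_iff hδ hr0 hr1 hX hg hc p P⟩
  simpa only [real_inner_smul_right, div_eq_inv_mul, Finset.mul_sum] using
    hdec.tendsto_norm_charFun_sub hδ hr1 hX hg hc p t

/-- Finite-dimensional-distribution step in the proof of Theorem 2.8 (the weak invariance
principle version of Eagleson's theorem): for any `0 < s₁ ≤ ... ≤ s_m` and
`t = (t₁,...,t_m) ∈ (ℝ^d)^m`, the difference of the joint characteristic functions of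
`(S_{[ns₁]},...,S_{[ns_m]})/bₙ` under `ν = r dμ` and under `μ` tends to `0`; in particular
the finite-dimensional distributions converge weakly under `μ` iff they do under `ν`, with
the same limit. -/
theorem eagleson_fdd
    {E : Type*} [MeasurableSpace E] (μ : Measure E) [IsProbabilityMeasure μ]
    {𝒳 : ℕ → Type*} [∀ i, MeasurableSpace (𝒳 i)]
    (X : ∀ i, E → 𝒳 i) (hX : ∀ i, Measurable (X i))
    (δ : ℕ → ℝ) (hδ0 : ∀ n, 0 ≤ δ n) (hδ : Tendsto δ atTop (𝓝 0))
    (r : E → ℝ) (hrmeas : Measurable r) (hr0 : ∀ x, 0 ≤ r x) (hr1 : ∫ x, r x ∂μ = 1)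
    (K : ℝ) (hK : 0 ≤ K) (hdec : Decorrelates μ X r K δ)
    (ν : Measure E) (hν : ν = μ.withDensity (fun x => ENNReal.ofReal (r x)))
    {d : ℕ} (g : ∀ j, (∀ i, 𝒳 (j + i)) → EuclideanSpace ℝ (Fin d))
    (hg : ∀ j, Measurable (g j))
    (S : ℕ → E → EuclideanSpace ℝ (Fin d))
    (hS : ∀ n x, S n x = ∑ j ∈ Finset.range n, g j (Xbar X j x))
    (hSint : ∀ n, Integrable (S n) μ)
    (hSrint : ∀ n, Integrable (fun x => r x * ‖S n x‖) μ)
    (b : ℕ → ℝ) (hb0 : ∀ n, 0 < b n) (hb : Tendsto b atTop atTop)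
    (m : ℕ) (hm : 1 ≤ m) (s : Fin m → ℝ) (hspos : ∀ k, 0 < s k) (hsmono : Monotone s) :
    (∀ t : Fin m → EuclideanSpace ℝ (Fin d),
      Tendsto (fun n : ℕ =>
        ‖(∫ x, (r x : ℂ) * Complex.exp
              (((∑ k, ⟪t k, S (⌊(n : ℝ) * s k⌋₊) x⟫) / b n : ℝ) * Complex.I) ∂μ) -
            ∫ x, Complex.exp
              (((∑ k, ⟪t k, S (⌊(n : ℝ) * s k⌋₊) x⟫) / b n : ℝ) * Complex.I) ∂μ‖)
        atTop (𝓝 0)) ∧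
    ((∃ P : Measure (Fin m → EuclideanSpace ℝ (Fin d)), IsProbabilityMeasure P ∧
        TendstoInDistribution μ
          (fun n x => fun k => (b n)⁻¹ • S (⌊(n : ℝ) * s k⌋₊) x) P) ↔
      (∃ P : Measure (Fin m → EuclideanSpace ℝ (Fin d)), IsProbabilityMeasure P ∧
        TendstoInDistribution ν
          (fun n x => fun k => (b n)⁻¹ • S (⌊(n : ℝ) * s k⌋₊) x) P)) ∧
    (∀ P Q : Measure (Fin m → EuclideanSpace ℝ (Fin d)),
      IsProbabilityMeasure P → IsProbabilityMeasure Q →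
      TendstoInDistribution μ (fun n x => fun k => (b n)⁻¹ • S (⌊(n : ℝ) * s k⌋₊) x) P →
      TendstoInDistribution ν (fun n x => fun k => (b n)⁻¹ • S (⌊(n : ℝ) * s k⌋₊) x) Q →
      P = Q) := by
  obtain ⟨hchar, hiff⟩ := eagleson_fdd_general μ X hX δ hδ r (ae_of_all _ hr0) hr1 K hdec ν hν
    g hg S hS b hb fun n k => ⌊(n : ℝ) * s k⌋₊
  exact ⟨hchar, exists_congr fun P => and_congr_right (hiff P),
    fun P Q hP _ hμP hνQ => ((hiff P hP).1 hμP).unique hνQ⟩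
end
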